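/- Let M ∈ ℝ^{m×n} be an entrywise nonnegative matrix with rank(M) = 2 whose columns are pairwise not scalar multiples of each other. Then rank₊(M) = 2 and the preprocessed matrix P(M) has exactly two nonzero columns S_{:1}, S_{:2}, and there exists an entrywise nonnegative 2×n matrix R with M = [S_{:1} S_{:2}] R; i.e., the preprocessing identifies an optimal nonnegative basis for the NMF problem associated with M. -/

import Mathlib

open Matrix BigOperators

/-- The column `j` of `M` normalized to unit ℓ₁-norm. -/
noncomputable def normCol {m n : ℕ} (M : Matrix (Fin m) (Fin n) ℝ) (j : Fin n) : Fin m → ℝ :=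
  (∑ i, |M i j|)⁻¹ • fun i => M i j

/-- Column `j` of `M` is nonzero. -/
def colNZ {m n : ℕ} (M : Matrix (Fin m) (Fin n) ℝ) (j : Fin n) : Prop :=
  (fun i => M i j) ≠ 0

/-- `θ(M)`: the set of ℓ₁-normalized nonzero columns of `M`. -/
noncomputable def thetaCols {m n : ℕ} (M : Matrix (Fin m) (Fin n) ℝ) : Set (Fin m → ℝ) :=
  {x | ∃ j, colNZ M j ∧ x = normCol M j}

/-- The nonnegative rank of `M`. -/
noncomputable def nnRank {m n : ℕ} (M : Matrix (Fin m) (Fin n) ℝ) : ℕ :=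
  sInf {r : ℕ | ∃ U : Matrix (Fin m) (Fin r) ℝ, ∃ V : Matrix (Fin r) (Fin n) ℝ,
    (∀ i j, 0 ≤ U i j) ∧ (∀ i j, 0 ≤ V i j) ∧ M = U * V}

/-- The squared Frobenius norm. -/
noncomputable def frobSq {m n : ℕ} (A : Matrix (Fin m) (Fin n) ℝ) : ℝ :=
  ∑ i, ∑ j, (A i j) ^ 2

/-- Feasibility for problem (tigrel): `B ≥ 0`, zero diagonal, `MB ≤ M` entrywise. -/
def TigrelFeasible {m n : ℕ} (M : Matrix (Fin m) (Fin n) ℝ)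
    (B : Matrix (Fin n) (Fin n) ℝ) : Prop :=
  (∀ i j, 0 ≤ B i j) ∧ (∀ i, B i i = 0) ∧ ∀ i j, (M * B) i j ≤ M i j

/-- Optimality for problem (tigrel): feasible and minimizes `‖M - MB‖_F²`. -/
def TigrelOpt {m n : ℕ} (M : Matrix (Fin m) (Fin n) ℝ)
    (B : Matrix (Fin n) (Fin n) ℝ) : Prop :=
  TigrelFeasible M B ∧
    ∀ B', TigrelFeasible M B' → frobSq (M - M * B) ≤ frobSq (M - M * B')

/-- A monomial matrix: permutation of a diagonal matrix with positive diagonal. -/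
def IsMonomial {k : ℕ} (P : Matrix (Fin k) (Fin k) ℝ) : Prop :=
  ∃ (σ : Equiv.Perm (Fin k)) (d : Fin k → ℝ), (∀ i, 0 < d i) ∧
    ∀ i j, P i j = if i = σ j then d j else 0

/-- Every extreme point of `conv(θ(M))` equals `θ(M_{:j})` for exactly one column `j`. -/
def NonRepeatedVertices {m n : ℕ} (M : Matrix (Fin m) (Fin n) ℝ) : Prop :=
  ∀ x ∈ Set.extremePoints ℝ (convexHull ℝ (thetaCols M)),
    ∃! j : Fin n, colNZ M j ∧ x = normCol M j

/-- Uniqueness of size-`r` exact NMF up to permutation and scaling. -/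
def UniqueNMF {m n : ℕ} (r : ℕ) (M : Matrix (Fin m) (Fin n) ℝ) : Prop :=
  ∀ (U₁ U₂ : Matrix (Fin m) (Fin r) ℝ) (V₁ V₂ : Matrix (Fin r) (Fin n) ℝ),
    (∀ i j, 0 ≤ U₁ i j) → (∀ i j, 0 ≤ V₁ i j) →
    (∀ i j, 0 ≤ U₂ i j) → (∀ i j, 0 ≤ V₂ i j) →
    M = U₁ * V₁ → M = U₂ * V₂ →
    ∃ P : Matrix (Fin r) (Fin r) ℝ, IsMonomial P ∧ U₂ = U₁ * P ∧ V₂ = P⁻¹ * V₁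

/-- Separability of a factorization, expressed as a property of the right factor `V`. -/
def SeparableFactor {r n : ℕ} (V : Matrix (Fin r) (Fin n) ℝ) : Prop :=
  ∀ i : Fin r, ∃ j : Fin n, V i j ≠ 0 ∧ ∀ i' : Fin r, i' ≠ i → V i' j = 0

/-- The Frobenius norm. -/
noncomputable def frobNorm {m n : ℕ} (A : Matrix (Fin m) (Fin n) ℝ) : ℝ :=
  Real.sqrt (∑ i, ∑ j, (A i j) ^ 2)

/-- The Euclidean (ℓ₂) norm of a vector. -/
noncomputable def vecNorm2 {n : ℕ} (x : Fin n → ℝ) : ℝ :=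
  Real.sqrt (∑ i, (x i) ^ 2)

/-- The spectral (operator 2-) norm of a matrix. -/
noncomputable def specNorm {m n : ℕ} (A : Matrix (Fin m) (Fin n) ℝ) : ℝ :=
  sSup {c : ℝ | ∃ x : Fin n → ℝ, vecNorm2 x ≤ 1 ∧ c = vecNorm2 (A.mulVec x)}

/-!
The residual column `M_j - (MB)_j` of an optimal `B` vanishes exactly when `M_j` lies in the cone
of the other columns: column `j` of `B` can be replaced, independently of the rest, by the
coefficients of such a representation, which makes the residual zero there.

Scaled to coordinate sum `1`, the columns of a nonnegative matrix of rank two lie on a line, so the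
two outermost ones, `x` and `y`, generate the cone of all columns. As no column is a multiple of
another, `x` and `y` are the only columns outside the cone of the others, hence the only ones with
nonzero residuals `s` and `t`.

Finally `x - s` and `y - t` lie in `cone {x, y}`. From `x - s = a x + b y` one gets
`(1 - a) x = s + b y`, where `a < 1` because `s` is nonzero and everything is nonnegative; so `s`
can take the place of `x` as a generator, and then likewise `t` that of `y`.
-/

section Geometry

variable {K : Type*} [Field K]

section Linear

variable {E : Type*} [AddCommGroup E] [Module K E]

theorem finrank_vectorSpan_lt_finrank_span {s : Set E} (hs : s.Nonempty)
    [FiniteDimensional K (Submodule.span K s)] (L : E →ₗ[K] K) (hL : ∀ x ∈ s, L x = 1) :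
    Module.finrank K (vectorSpan K s) < Module.finrank K (Submodule.span K s) := by
  have le_span : vectorSpan K s ≤ Submodule.span K s := by
    rw [vectorSpan_def, Submodule.span_le]
    rintro _ ⟨x, hx, y, hy, rfl⟩
    exact sub_mem (Submodule.subset_span hx) (Submodule.subset_span hy)
  have le_ker : vectorSpan K s ≤ LinearMap.ker L := by
    rw [vectorSpan_def, Submodule.span_le]
    rintro _ ⟨x, hx, y, hy, rfl⟩
    simp [hL x hx, hL y hy]
  obtain ⟨x, hx⟩ := hs
  refine Submodule.finrank_lt_finrank_of_lt (le_span.lt_of_not_ge fun span_le => ?_)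
  have : L x = 0 := le_ker (span_le (Submodule.subset_span hx))
  exact one_ne_zero ((hL x hx).symm.trans this)

end Linear

variable [LinearOrder K] [IsStrictOrderedRing K]

theorem exists_forall_wbtw_of_collinear_range {V P ι : Type*} [AddCommGroup V] [Module K V]
    [AddTorsor V P] [Finite ι] [Nonempty ι] {x : ι → P} (hx : Collinear K (Set.range x)) :
    ∃ i j, ∀ k, Wbtw K (x i) (x k) (x j) := by
  obtain ⟨p, v, hpv⟩ := (collinear_iff_exists_forall_eq_smul_vadd _).1 hx
  choose r hr using fun k => hpv (x k) ⟨k, rfl⟩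
  obtain ⟨i, hi⟩ := Finite.exists_min r
  obtain ⟨j, hj⟩ := Finite.exists_max r
  refine ⟨i, j, fun k => ?_⟩
  simpa only [AffineMap.lineMap_apply, vadd_vsub, ← hr] using
    (Wbtw.of_le_of_le (hi k) (hj k)).map (AffineMap.lineMap p (v +ᵥ p))

section Cone

variable {E : Type*} [AddCommGroup E] [Module K E] {ι : Type*} {v : ι → E} {i j : ι}

theorem exists_forall_mem_hull_pair [Finite ι] [Nonempty ι]
    (hv : Module.finrank K (Submodule.span K (Set.range v)) ≤ 2) (L : E →ₗ[K] K)
    (hL : ∀ k, 0 < L (v k)) :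
    ∃ i j, ∀ k, v k ∈ PointedCone.hull K {v i, v j} := by
  set x : ι → E := fun k => (L (v k))⁻¹ • v k with hx
  have span_le : Submodule.span K (Set.range x) ≤ Submodule.span K (Set.range v) := by
    rw [Submodule.span_le]
    rintro _ ⟨k, rfl⟩
    exact Submodule.smul_mem _ _ (Submodule.subset_span ⟨k, rfl⟩)
  have L_eq_one : ∀ y ∈ Set.range x, L y = 1 := by
    rintro _ ⟨k, rfl⟩
    simp [hx, (hL k).ne']
  have := FiniteDimensional.span_of_finite K (Set.finite_range v)
  have := FiniteDimensional.span_of_finite K (Set.finite_range x)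
  have collinear : Collinear K (Set.range x) := by
    have := finiteDimensional_vectorSpan_of_finite K (Set.finite_range x)
    have lt := finrank_vectorSpan_lt_finrank_span (Set.range_nonempty x) L L_eq_one
    have le := Submodule.finrank_mono span_le
    exact collinear_iff_finrank_le_one.2 (by lia)
  obtain ⟨i, j, hij⟩ := exists_forall_wbtw_of_collinear_range collinear
  refine ⟨i, j, fun k => ?_⟩
  have x_mem : ∀ {l}, v l ∈ ({v i, v j} : Set E) → x l ∈ PointedCone.hull K {v i, v j} :=
    fun {l} hl => PointedCone.smul_mem _ (inv_pos.2 (hL l)).le (PointedCone.subset_hull hl)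
  exact (PointedCone.smul_mem_iff _ (inv_pos.2 (hL k))).1 <|
    (PointedCone.convex _).segment_subset (x_mem (by simp)) (x_mem (by simp))
      (mem_segment_iff_wbtw.2 (hij k))

theorem pos_of_mem_hull_of_ne_zero {s : Set E} {L : E →ₗ[K] K} (hL : ∀ x ∈ s, 0 < L x) {z : E}
    (hz : z ∈ PointedCone.hull K s) (hz₀ : z ≠ 0) : 0 < L z := by
  have nonneg : ∀ w ∈ PointedCone.hull K s, w = 0 ∨ 0 < L w := by
    intro w hw
    induction hw using Submodule.span_induction with
    | mem x hx => exact .inr (hL x hx)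
    | zero => exact .inl rfl
    | add x y _ _ hx hy =>
      rcases hx with rfl | hx
      · simpa using hy
      · rcases hy with rfl | hy
        · simpa using Or.inr hx
        · exact .inr (by simpa using add_pos hx hy)
    | smul a x _ hx =>
      obtain ⟨a, ha⟩ := a
      rw [Nonneg.mk_smul]
      rcases hx with rfl | hx
      · simp
      · rcases ha.eq_or_lt with rfl | ha
        · simp
        · exact .inr (by simpa using mul_pos ha hx)
  exact (nonneg z hz).resolve_left hz₀

theorem notMem_hull_image_compl_singleton
    (hv : Pairwise fun k l => ∀ c : K, v k ≠ c • v l) (hij : i ≠ j)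
    (hcone : ∀ k, v k ∈ PointedCone.hull K {v i, v j}) :
    v i ∉ PointedCone.hull K (v '' {i}ᶜ) := by
  have v_j_notMem : v j ∉ Submodule.span K {v i} := fun h => by
    obtain ⟨c, hc⟩ := Submodule.mem_span_singleton.1 h
    exact hv hij.symm c hc.symm
  obtain ⟨f, f_j_ne, span_le_ker⟩ := Submodule.exists_le_ker_of_notMem v_j_notMem
  have f_i : f (v i) = 0 := span_le_ker (Submodule.mem_span_singleton_self _)
  have pos : ∀ x ∈ v '' {i}ᶜ, 0 < ((f (v j))⁻¹ • f) x := by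
    rintro _ ⟨k, hk, rfl⟩
    obtain ⟨⟨a, _⟩, ⟨c, hc⟩, hac⟩ := Submodule.mem_span_pair.1 (hcone k)
    rw [Nonneg.mk_smul, Nonneg.mk_smul] at hac
    have c_ne : c ≠ 0 := by
      rintro rfl
      exact hv hk a (by simpa using hac.symm)
    have apply_v_k : ((f (v j))⁻¹ • f) (v k) = c := by
      simp [← hac, f_i, mul_left_comm, f_j_ne]
    exact apply_v_k ▸ hc.lt_of_ne' c_ne
  intro h
  have v_i_ne : v i ≠ 0 := by simpa using hv hij 0
  simpa [f_i] using pos_of_mem_hull_of_ne_zero pos h v_i_ne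

theorem ne_of_forall_mem_hull_pair [Nontrivial ι]
    (hv : Pairwise fun k l => ∀ c : K, v k ≠ c • v l)
    (hcone : ∀ k, v k ∈ PointedCone.hull K {v i, v j}) : i ≠ j := by
  rintro rfl
  obtain ⟨k, hk⟩ := exists_ne i
  have v_k_mem := hcone k
  rw [Set.pair_eq_singleton, Submodule.mem_span_singleton] at v_k_mem
  obtain ⟨c, hc⟩ := v_k_mem
  exact hv hk c hc.symm

theorem notMem_hull_image_compl_singleton_iff
    (hv : Pairwise fun k l => ∀ c : K, v k ≠ c • v l) (hij : i ≠ j)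
    (hcone : ∀ k, v k ∈ PointedCone.hull K {v i, v j}) {k : ι} :
    v k ∉ PointedCone.hull K (v '' {k}ᶜ) ↔ k = i ∨ k = j := by
  constructor
  · contrapose!
    rintro ⟨hki, hkj⟩
    exact Submodule.span_mono (Set.pair_subset (Set.mem_image_of_mem v hki.symm)
      (Set.mem_image_of_mem v hkj.symm)) (hcone k)
  · rintro (rfl | rfl)
    · exact notMem_hull_image_compl_singleton hv hij hcone
    · exact notMem_hull_image_compl_singleton hv hij.symm (Set.pair_comm (v i) _ ▸ hcone)

end Cone

section OrderedCone

variable {E : Type*} [AddCommGroup E] [PartialOrder E] [IsOrderedAddMonoid E] [Module K E]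
  [IsStrictOrderedModule K E] {x y s t : E}

theorem mem_hull_insert_of_sub_mem_hull_insert {Y : Set E} (hx : 0 ≤ x) (hY : ∀ y ∈ Y, 0 ≤ y)
    (hs : 0 < s) (h : x - s ∈ PointedCone.hull K (insert x Y)) :
    x ∈ PointedCone.hull K (insert s Y) := by
  obtain ⟨a, z, hz, hxs⟩ := Submodule.mem_span_insert.1 h
  have hz₀ : 0 ≤ z := (Submodule.span_le.2 hY : PointedCone.hull K Y ≤ .positive K E) hz
  have eq : (1 - (a : K)) • x = s + z := by
    rw [sub_smul, one_smul, sub_eq_iff_eq_add, add_assoc, add_comm z, ← sub_eq_iff_eq_add', hxs]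
    rfl
  have pos : 0 < 1 - (a : K) :=
    pos_of_smul_pos_right (eq ▸ add_pos_of_pos_of_nonneg hs hz₀) hx
  rw [← PointedCone.smul_mem_iff _ pos, eq]
  exact add_mem (PointedCone.subset_hull (Set.mem_insert ..))
    (Submodule.span_mono (Set.subset_insert ..) hz)

theorem hull_pair_le_hull_pair_of_sub_mem (hx : 0 ≤ x) (hy : 0 ≤ y) (hs : 0 < s) (ht : 0 < t)
    (hxs : x - s ∈ PointedCone.hull K {x, y}) (hyt : y - t ∈ PointedCone.hull K {x, y}) :
    PointedCone.hull K {x, y} ≤ PointedCone.hull K {s, t} := by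
  have hull_xy_le : PointedCone.hull K {x, y} ≤ PointedCone.hull K {y, s} := by
    rw [Submodule.span_le, Set.pair_subset_iff, Set.pair_comm y s]
    exact ⟨mem_hull_insert_of_sub_mem_hull_insert hx (by simpa) hs hxs,
      PointedCone.subset_hull (by simp)⟩
  refine hull_xy_le.trans ?_
  rw [Submodule.span_le, Set.pair_subset_iff, Set.pair_comm s t]
  exact ⟨mem_hull_insert_of_sub_mem_hull_insert hy (by simpa using hs.le) ht (hull_xy_le hyt),
    PointedCone.subset_hull (by simp)⟩

end OrderedCone

end Geometry

section NonnegativeMatrix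

section HullCol

variable {R m n : Type*} [CommRing R] [PartialOrder R] [IsOrderedRing R]

theorem mem_hull_image_col_iff [Fintype n] {M : Matrix m n R} {s : Set n} {x : m → R} :
    x ∈ PointedCone.hull R (M.col '' s) ↔ ∃ c, 0 ≤ c ∧ (∀ k ∉ s, c k = 0) ∧ M *ᵥ c = x := by
  classical
  constructor
  · intro hx
    rw [← s.coe_toFinset, Submodule.mem_span_image_finset_iff_exists_fun'] at hx
    obtain ⟨c, rfl⟩ := hx
    refine ⟨s.indicator fun k => c k, Set.indicator_nonneg fun k _ => (c k).2,
      fun k hk => Set.indicator_of_notMem hk _, ?_⟩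
    simp only [Matrix.mulVec_eq_sum, op_smul_eq_smul, Set.indicator_apply, ite_smul, zero_smul,
      ← Finset.sum_filter, Set.filter_mem_univ_eq_toFinset]
    rfl
  · rintro ⟨c, hc, hcs, rfl⟩
    simp only [Matrix.mulVec_eq_sum, op_smul_eq_smul]
    refine sum_mem fun k _ => ?_
    by_cases hk : k ∈ s
    · exact PointedCone.smul_mem _ (hc k) (PointedCone.subset_hull (Set.mem_image_of_mem _ hk))
    · simp [hcs k hk]

theorem exists_nonneg_eq_mul_of_forall_col_mem_hull [Fintype n] {k : Type*} {A : Matrix m k R}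
    {U : Matrix m n R} (h : ∀ j, A.col j ∈ PointedCone.hull R (Set.range U.col)) :
    ∃ V : Matrix n k R, (∀ i j, 0 ≤ V i j) ∧ A = U * V := by
  simp only [← Set.image_univ, mem_hull_image_col_iff] at h
  choose V hV _ hUV using h
  refine ⟨(Matrix.of V)ᵀ, fun i j => hV j i, ?_⟩
  ext p j
  exact (congrFun (hUV j) p).symm

theorem exists_nonneg_eq_of_mul_of_forall_col_mem_hull_pair {k : Type*} {A : Matrix m k R}
    {S : Matrix m n R} {j₁ j₂ : n}
    (h : ∀ j, A.col j ∈ PointedCone.hull R {S.col j₁, S.col j₂}) :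
    ∃ V : Matrix (Fin 2) k R, (∀ i j, 0 ≤ V i j) ∧
      A = (Matrix.of fun p (i : Fin 2) => S p (if i = 0 then j₁ else j₂)) * V := by
  refine exists_nonneg_eq_mul_of_forall_col_mem_hull fun j => Submodule.span_mono ?_ (h j)
  exact Set.pair_subset ⟨0, by ext; simp⟩ ⟨1, by ext; simp⟩

end HullCol

theorem col_sub_col_mul_one_sub {R m n : Type*} [Ring R] [Fintype n] [DecidableEq n]
    (M : Matrix m n R) (B : Matrix n n R) (j : n) :
    M.col j - (M * (1 - B)).col j = (M * B).col j := by
  ext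
  simp [Matrix.mul_sub]

variable {m n : ℕ} {M : Matrix (Fin m) (Fin n) ℝ}

theorem colNZ_iff_col_ne_zero {j : Fin n} : colNZ M j ↔ M.col j ≠ 0 :=
  Iff.rfl

theorem nnRank_le_of_eq_mul {r : ℕ} {U : Matrix (Fin m) (Fin r) ℝ} {V : Matrix (Fin r) (Fin n) ℝ}
    (hU : ∀ i j, 0 ≤ U i j) (hV : ∀ i j, 0 ≤ V i j) (h : M = U * V) : nnRank M ≤ r :=
  Nat.sInf_le ⟨U, V, hU, hV, h⟩

theorem rank_le_nnRank (hM : ∀ i j, 0 ≤ M i j) : M.rank ≤ nnRank M := by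
  refine le_csInf ⟨n, M, 1, hM, fun i j => ?_, (Matrix.mul_one M).symm⟩ ?_
  · rw [Matrix.one_apply]; positivity
  · rintro r ⟨U, V, -, -, rfl⟩
    exact (Matrix.rank_mul_le_left U V).trans U.rank_le_width

theorem exists_forall_col_mem_hull_pair [Nonempty (Fin n)] (hM : ∀ i j, 0 ≤ M i j)
    (hrank : M.rank ≤ 2) (hcol : ∀ j, M.col j ≠ 0) :
    ∃ j₁ j₂, ∀ j, M.col j ∈ PointedCone.hull ℝ {M.col j₁, M.col j₂} := by
  rw [Matrix.rank_eq_finrank_span_cols] at hrank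
  refine exists_forall_mem_hull_pair hrank (∑ i, LinearMap.proj (R := ℝ) (φ := fun _ => ℝ) i)
    fun j => ?_
  obtain ⟨i, hi⟩ := Function.ne_iff.1 (hcol j)
  simpa using
    Finset.sum_pos' (fun i _ => hM i j) ⟨i, Finset.mem_univ i, (hM i j).lt_of_ne' hi⟩

theorem frobSq_eq_frobSq_updateCol_zero_add (A : Matrix (Fin m) (Fin n) ℝ) (j : Fin n) :
    frobSq A = frobSq (A.updateCol j 0) + ∑ i, A i j ^ 2 := by
  simp only [frobSq, ← Finset.sum_add_distrib]
  refine Finset.sum_congr rfl fun i _ => ?_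
  simp [Matrix.updateCol_apply, ite_pow, Finset.sum_ite, Finset.filter_ne']

theorem col_eq_zero_of_frobSq_le (A : Matrix (Fin m) (Fin n) ℝ) (j : Fin n)
    (h : frobSq A ≤ frobSq (A.updateCol j 0)) : A.col j = 0 := by
  rw [frobSq_eq_frobSq_updateCol_zero_add A j, add_le_iff_nonpos_right] at h
  have := (Finset.sum_eq_zero_iff_of_nonneg fun i _ => sq_nonneg (A i j)).1
    (h.antisymm (by positivity))
  ext i
  simpa using this i (Finset.mem_univ i)

namespace TigrelFeasible

variable {B : Matrix (Fin n) (Fin n) ℝ}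

theorem mul_one_sub_nonneg (hB : TigrelFeasible M B) (i : Fin m) (j : Fin n) :
    0 ≤ (M * (1 - B) : Matrix _ _ ℝ) i j := by
  simpa [Matrix.mul_sub] using hB.2.2 i j

theorem updateCol (hB : TigrelFeasible M B) {j : Fin n} {c : Fin n → ℝ} (hc : 0 ≤ c)
    (hcj : c j = 0) (hMc : M *ᵥ c ≤ M.col j) : TigrelFeasible M (B.updateCol j c) := by
  obtain ⟨nonneg, diag, le⟩ := hB
  refine ⟨fun i k => ?_, fun k => ?_, fun i k => ?_⟩
  · rcases eq_or_ne k j with rfl | hk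
    · simpa using hc i
    · simpa [hk] using nonneg i k
  · rcases eq_or_ne k j with rfl | hk
    · simpa using hcj
    · simpa [hk] using diag k
  · rw [Matrix.mul_updateCol]
    rcases eq_or_ne k j with rfl | hk
    · simpa using hMc i
    · simpa [hk] using le i k

theorem col_mul_mem_hull (hB : TigrelFeasible M B) (j : Fin n) :
    (M * B).col j ∈ PointedCone.hull ℝ (M.col '' {j}ᶜ) :=
  mem_hull_image_col_iff.2 ⟨B.col j, fun i => hB.1 i j, by simpa using hB.2.1 j, rfl⟩

theorem col_mem_hull_pair_col_mul_one_sub (hM : ∀ i j, 0 ≤ M i j) (hB : TigrelFeasible M B)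
    {j₁ j₂ : Fin n} (hcone : ∀ j, M.col j ∈ PointedCone.hull ℝ {M.col j₁, M.col j₂})
    (h₁ : colNZ (M * (1 - B)) j₁) (h₂ : colNZ (M * (1 - B)) j₂) (j : Fin n) :
    M.col j ∈ PointedCone.hull ℝ {(M * (1 - B)).col j₁, (M * (1 - B)).col j₂} := by
  have col_nonneg (k) : 0 ≤ M.col k := fun i => hM i k
  have residual_pos {k} (hk : colNZ (M * (1 - B)) k) : 0 < (M * (1 - B)).col k :=
    lt_of_le_of_ne' (fun i => hB.mul_one_sub_nonneg i k) (colNZ_iff_col_ne_zero.1 hk)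
  have sub_mem (k) :
      M.col k - (M * (1 - B)).col k ∈ PointedCone.hull ℝ {M.col j₁, M.col j₂} := by
    rw [col_sub_col_mul_one_sub]
    refine Submodule.span_le.2 ?_ (hB.col_mul_mem_hull k)
    rintro _ ⟨l, -, rfl⟩
    exact hcone l
  exact hull_pair_le_hull_pair_of_sub_mem (col_nonneg j₁) (col_nonneg j₂) (residual_pos h₁)
    (residual_pos h₂) (sub_mem j₁) (sub_mem j₂) (hcone j)

end TigrelFeasible

theorem TigrelOpt.colNZ_iff {B : Matrix (Fin n) (Fin n) ℝ} (hB : TigrelOpt M B) {j : Fin n} :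
    colNZ (M * (1 - B)) j ↔ M.col j ∉ PointedCone.hull ℝ (M.col '' {j}ᶜ) := by
  rw [colNZ_iff_col_ne_zero]
  refine not_congr ⟨fun h => ?_, fun h => ?_⟩
  · have : M.col j = (M * B).col j := by rw [← col_sub_col_mul_one_sub, h, sub_zero]
    exact this ▸ hB.1.col_mul_mem_hull j
  · obtain ⟨c, hc, hcj, hMc⟩ := mem_hull_image_col_iff.1 h
    have feasible := hB.1.updateCol hc (hcj j (by simp)) hMc.le
    have frobSq_le := hB.2 _ feasible
    have residual_eq : M - M * B.updateCol j c = (M - M * B).updateCol j 0 := by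
      rw [Matrix.mul_updateCol, hMc]
      ext i k
      rcases eq_or_ne k j with rfl | hk <;> simp [*]
    rw [residual_eq] at frobSq_le
    rw [Matrix.mul_sub, Matrix.mul_one]
    exact col_eq_zero_of_frobSq_le _ _ frobSq_le

end NonnegativeMatrix

/-- a rank-two nonnegative matrix whose columns are pairwise not scalar
multiples of each other has `rank₊(M) = 2`, and `P(M)` has exactly two nonzero
columns `S_{:1}, S_{:2}` with `M = [S_{:1} S_{:2}] R` for some `R ≥ 0`. -/
theorem stmt16 {m n : ℕ} (M : Matrix (Fin m) (Fin n) ℝ) (hM : ∀ i j, 0 ≤ M i j)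
    (hrank : M.rank = 2)
    (hnomult : ∀ i j : Fin n, i ≠ j → ∀ c : ℝ,
      (fun p => M p i) ≠ c • fun p => M p j)
    (B : Matrix (Fin n) (Fin n) ℝ) (hB : TigrelOpt M B) :
    nnRank M = 2 ∧
    ∃ j₁ j₂ : Fin n, j₁ ≠ j₂ ∧
      colNZ (M * (1 - B)) j₁ ∧ colNZ (M * (1 - B)) j₂ ∧
      (∀ j, colNZ (M * (1 - B)) j → j = j₁ ∨ j = j₂) ∧
      ∃ R : Matrix (Fin 2) (Fin n) ℝ, (∀ i j, 0 ≤ R i j) ∧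
        M = (Matrix.of fun (p : Fin m) (k : Fin 2) =>
              (M * (1 - B) : Matrix (Fin m) (Fin n) ℝ) p (if k = 0 then j₁ else j₂)) * R := by
  have : Nontrivial (Fin n) := Fin.nontrivial_iff_two_le.2 (hrank ▸ M.rank_le_width)
  have pairwise : Pairwise fun j k => ∀ c : ℝ, M.col j ≠ c • M.col k := fun j k => hnomult j k
  have col_ne_zero (j) : M.col j ≠ 0 := by
    obtain ⟨k, hk⟩ := exists_ne j
    simpa using pairwise hk.symm 0
  obtain ⟨j₁, j₂, hcone⟩ := exists_forall_col_mem_hull_pair hM hrank.le col_ne_zero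
  have hne : j₁ ≠ j₂ := ne_of_forall_mem_hull_pair pairwise hcone
  have nz_iff (j) : colNZ (M * (1 - B)) j ↔ j = j₁ ∨ j = j₂ :=
    hB.colNZ_iff.trans (notMem_hull_image_compl_singleton_iff pairwise hne hcone)
  have nz₁ := (nz_iff j₁).2 (.inl rfl)
  have nz₂ := (nz_iff j₂).2 (.inr rfl)
  obtain ⟨R, hR, hMR⟩ := exists_nonneg_eq_of_mul_of_forall_col_mem_hull_pair
    (hB.1.col_mem_hull_pair_col_mul_one_sub hM hcone nz₁ nz₂)
  have rank_eq : nnRank M = 2 :=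
    (nnRank_le_of_eq_mul (fun p _ => hB.1.mul_one_sub_nonneg p _) hR hMR).antisymm
      (hrank ▸ rank_le_nnRank hM)
  exact ⟨rank_eq, j₁, j₂, hne, nz₁, nz₂, fun j => (nz_iff j).1, R, hR, hMR⟩
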